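/- For every integer k ≥ 1, li_f(x) = c₀·x/log x + c₁·1!·x/(log x)² + ⋯ + c_{k-1}·(k-1)!·x/(log x)^k + O_k(x/(log x)^{k+1}) as x → ∞; that is, there is a constant C (depending on k) such that |li_f(x) − Σ_{n=0}^{k-1} c_n·n!·x/(log x)^{n+1}| ≤ C·x/(log x)^{k+1} for all sufficiently large x. -/

import Mathlib

open Filter Real MeasureTheory
open scoped Classical

/-- `lif x = ∫₂^x {x/t}/log t dt`. -/
noncomputable def lif (x : ℝ) : ℝ := ∫ t in (2:ℝ)..x, Int.fract (x / t) / Real.log t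
/-- `cconst n = (1/n!) ∫₁^∞ {u} (log u)^n / u² du`. -/
noncomputable def cconst (n : ℕ) : ℝ :=
  (1 / (n.factorial : ℝ)) * ∫ u in Set.Ioi (1:ℝ), Int.fract u * (Real.log u) ^ n / u ^ 2

theorem aux_int (m : ℕ) : IntegrableOn (fun u : ℝ => (Real.log u) ^ m / u ^ 2) (Set.Ioi 1) := by
  set e : ℝ := 1 / (2 * ((m : ℝ) + 1)) with he
  have hm : (0:ℝ) ≤ m := Nat.cast_nonneg m
  have he0 : 0 < e := by positivity
  have hem : e * m < 1 := by
    rw [he, one_div, inv_mul_lt_iff₀ (by positivity)]; linarith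
  have h1 : IntegrableOn (fun u : ℝ => (1 / e ^ m) * u ^ (e * m - 2)) (Set.Ioi 1) :=
    (integrableOn_Ioi_rpow_of_lt (by linarith) one_pos).const_mul _
  refine Integrable.mono' h1 ((Real.measurable_log.pow_const m).div
    (measurable_id.pow_const 2)).aestronglyMeasurable ?_
  refine (ae_restrict_iff' measurableSet_Ioi).2 (Eventually.of_forall fun u hu => ?_)
  have hu : 1 < u := hu
  have hu0 : 0 < u := by linarith
  have hl : 0 ≤ Real.log u := Real.log_nonneg hu.le
  rw [Real.norm_of_nonneg (by positivity)]
  have h2 : Real.log u ≤ u ^ e / e := Real.log_le_rpow_div hu0.le he0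
  have h3 : Real.log u ^ m ≤ (u ^ e / e) ^ m := pow_le_pow_left₀ hl h2 m
  have h4 : u ^ (e * m - 2) = (u ^ e) ^ m / u ^ 2 := by
    rw [Real.rpow_sub hu0, Real.rpow_mul hu0.le, Real.rpow_natCast]
    norm_num
  rw [h4]
  calc Real.log u ^ m / u ^ 2 ≤ (u ^ e / e) ^ m / u ^ 2 := by gcongr
    _ = _ := by rw [div_pow]; ring

theorem aux_intf (m : ℕ) :
    IntegrableOn (fun u : ℝ => Int.fract u * (Real.log u) ^ m / u ^ 2) (Set.Ioi 1) := by
  refine Integrable.mono' (aux_int m) ?_ ?_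
  · have := measurable_fract (R := ℝ)
    exact (((measurable_fract (R := ℝ)).mul (Real.measurable_log.pow_const m)).div
      (measurable_id.pow_const 2)).aestronglyMeasurable
  refine (ae_restrict_iff' measurableSet_Ioi).2 (Eventually.of_forall fun u hu => ?_)
  have hu : 1 < u := hu
  have hl : 0 ≤ Real.log u := Real.log_nonneg hu.le
  have hf := Int.fract_nonneg u
  have hf1 := (Int.fract_lt_one u).le
  rw [Real.norm_of_nonneg (by positivity)]
  gcongr
  exact mul_le_of_le_one_left (by positivity) hf1

noncomputable def auxA (x : ℝ) : ℝ → ℝ :=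
  (Set.Ioo 1 (x / 2)).indicator (fun u => Int.fract u / u ^ 2 * (1 / (Real.log x - Real.log u)))

theorem aux_lif (x : ℝ) (hx : 4 ≤ x) : lif x = x * ∫ u in Set.Ioi (1:ℝ), auxA x u := by
  have hx0 : 0 < x := by linarith
  unfold lif auxA
  rw [intervalIntegral.integral_of_le (by linarith), integral_Ioc_eq_integral_Ioo,
    setIntegral_indicator measurableSet_Ioo]
  have hs : Set.Ioi (1:ℝ) ∩ Set.Ioo 1 (x / 2) = Set.Ioo 1 (x / 2) :=
    Set.inter_eq_right.2 fun u hu => hu.1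
  have him : (fun u : ℝ => x / u) '' Set.Ioo 1 (x / 2) = Set.Ioo 2 x := by
    ext t
    constructor
    · rintro ⟨u, ⟨h1, h2⟩, rfl⟩
      have hu : 0 < u := by linarith
      constructor
      · show 2 < x / u
        rw [lt_div_iff₀ hu]; linarith
      · exact div_lt_self hx0 h1
    · rintro ⟨h1, h2⟩
      have ht : 0 < t := by linarith
      refine ⟨x / t, ⟨?_, ?_⟩, ?_⟩
      · rwa [lt_div_iff₀ ht, one_mul]
      · exact div_lt_div_of_pos_left hx0 two_pos h1
      · show x / (x / t) = t
        field_simp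
  rw [hs, ← him, integral_image_eq_integral_abs_deriv_smul (f' := fun u => - x / u ^ 2)
    measurableSet_Ioo, ← integral_const_mul]
  · refine setIntegral_congr_fun measurableSet_Ioo fun u hu => ?_
    have hu0 : 0 < u := by linarith [hu.1]
    have h1 : x / (x / u) = u := by field_simp
    simp only [smul_eq_mul]
    rw [h1, Real.log_div hx0.ne' hu0.ne', neg_div, abs_neg, abs_of_pos (by positivity)]
    ring
  · intro u hu
    have hu0 : u ≠ 0 := by linarith [hu.1]
    have := (hasDerivAt_inv hu0).const_mul x
    refine HasDerivAt.hasDerivWithinAt ?_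
    have e : -x / u ^ 2 = x * -(u ^ 2)⁻¹ := by ring
    show HasDerivAt (fun u : ℝ => x / u) (-x / u ^ 2) u
    rw [e]
    exact this
  · intro u hu v hv h
    have hu0 : u ≠ 0 := by linarith [hu.1]
    have hv0 : v ≠ 0 := by linarith [hv.1]
    simp only at h
    field_simp at h
    exact h.symm

theorem aux_loggap (x u : ℝ) (hu : u ∈ Set.Ioo 1 (x / 2)) :
    Real.log 2 ≤ Real.log x - Real.log u := by
  have h1 := hu.1
  have h2 := hu.2
  have : Real.log (2 * u) ≤ Real.log x := Real.log_le_log (by linarith) (by linarith)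
  rw [Real.log_mul two_ne_zero (by linarith)] at this
  linarith

theorem aux_Aint (x : ℝ) : IntegrableOn (auxA x) (Set.Ioi 1) := by
  refine Integrable.mono' ((aux_int 0).const_mul (1 / Real.log 2)) ?_ ?_
  · refine (Measurable.indicator ?_ measurableSet_Ioo).aestronglyMeasurable
    exact ((measurable_fract (R := ℝ)).div (measurable_id.pow_const 2)).mul
      ((measurable_const.sub Real.measurable_log).const_div 1)
  refine (ae_restrict_iff' measurableSet_Ioi).2 (Eventually.of_forall fun u hu => ?_)
  have hu : 1 < u := hu
  have hl2 : 0 < Real.log 2 := Real.log_pos one_lt_two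
  unfold auxA
  by_cases hm : u ∈ Set.Ioo 1 (x / 2)
  · rw [Set.indicator_of_mem hm]
    have h := aux_loggap x u hm
    have hp : 0 < Real.log x - Real.log u := by linarith
    have hf := Int.fract_nonneg u
    have hf1 := (Int.fract_lt_one u).le
    rw [Real.norm_of_nonneg (by positivity), pow_zero, mul_comm]
    gcongr
  · rw [Set.indicator_of_notMem hm, norm_zero]
    positivity

theorem aux_geom (L l : ℝ) (hL : L ≠ 0) (h : L - l ≠ 0) (k : ℕ) :
    1 / (L - l) - ∑ n ∈ Finset.range k, l ^ n / L ^ (n + 1) = l ^ k / (L ^ k * (L - l)) := by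
  induction k with
  | zero => simp
  | succ k ih =>
    rw [Finset.sum_range_succ, ← sub_sub, ih]
    field_simp
    ring

theorem aux_pt (k : ℕ) (x : ℝ) (hx : 4 ≤ x) (u : ℝ) (hu : 1 < u) :
    ‖auxA x u - ∑ n ∈ Finset.range k, Int.fract u * (Real.log u) ^ n / u ^ 2 / (Real.log x) ^ (n + 1)‖
      ≤ ((k * 2 ^ k + 1) * ((Real.log u) ^ k / u ^ 2)
        + 1 / Real.log 2 * ((Real.log u) ^ (k + 1) / u ^ 2)) * (1 / (Real.log x) ^ (k + 1)) := by
  have hl2 : 0 < Real.log 2 := Real.log_pos one_lt_two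
  have hL : 0 < Real.log x := Real.log_pos (by linarith)
  have hl : 0 < Real.log u := Real.log_pos hu
  have hf := Int.fract_nonneg u
  have hf1 := (Int.fract_lt_one u).le
  have hS : ∑ n ∈ Finset.range k, Int.fract u * (Real.log u) ^ n / u ^ 2 / (Real.log x) ^ (n + 1)
      = Int.fract u / u ^ 2 * ∑ n ∈ Finset.range k, (Real.log u) ^ n / (Real.log x) ^ (n + 1) := by
    rw [Finset.mul_sum]
    refine Finset.sum_congr rfl fun n _ => ?_
    ring
  rw [hS]
  unfold auxA
  have hfu : Int.fract u / u ^ 2 ≤ 1 / u ^ 2 := by gcongr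
  have hfu0 : 0 ≤ Int.fract u / u ^ 2 := by positivity
  by_cases hm : u ∈ Set.Ioo 1 (x / 2)
  · rw [Set.indicator_of_mem hm, ← mul_sub]
    have h := aux_loggap x u hm
    have hp : 0 < Real.log x - Real.log u := by linarith
    rw [aux_geom _ _ hL.ne' hp.ne']
    set L := Real.log x
    set l := Real.log u
    rw [Real.norm_of_nonneg (by positivity)]
    have h1 : 1 / (L - l) ≤ (1 + l / Real.log 2) / L := by
      have : 1 / (L - l) = (1 + l / (L - l)) / L := by field_simp; ring
      rw [this]
      gcongr
    calc Int.fract u / u ^ 2 * (l ^ k / (L ^ k * (L - l)))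
        = Int.fract u / u ^ 2 * (l ^ k / L ^ k * (1 / (L - l))) := by field_simp
      _ ≤ 1 / u ^ 2 * (l ^ k / L ^ k * ((1 + l / Real.log 2) / L)) := by gcongr
      _ = ((0 + 1) * (l ^ k / u ^ 2)
        + 1 / Real.log 2 * (l ^ (k + 1) / u ^ 2)) * (1 / L ^ (k + 1)) := by
          field_simp
          ring
      _ ≤ _ := by
          gcongr
          positivity
  · rw [Set.indicator_of_notMem hm, zero_sub, norm_neg]
    have hux : x / 2 ≤ u := by
      by_contra hc
      exact hm ⟨hu, not_le.1 hc⟩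
    have hlL : Real.log x ≤ 2 * Real.log u := by
      have h4 : Real.log x ≤ Real.log (u ^ 2) := by
        apply Real.log_le_log (by linarith)
        nlinarith
      rw [Real.log_pow] at h4
      exact_mod_cast h4
    set L := Real.log x
    set l := Real.log u
    rw [Real.norm_of_nonneg (mul_nonneg hfu0 (Finset.sum_nonneg fun n _ => by positivity))]
    have hb : ∑ n ∈ Finset.range k, l ^ n / L ^ (n + 1) ≤ k * (2 ^ k * l ^ k / L ^ (k + 1)) := by
      have := Finset.sum_le_card_nsmul (Finset.range k) (fun n => l ^ n / L ^ (n + 1))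
        (2 ^ k * l ^ k / L ^ (k + 1)) ?_
      · simpa using this
      · intro n hn
        have hn : n < k := Finset.mem_range.1 hn
        obtain ⟨d, rfl⟩ := Nat.exists_eq_add_of_le hn.le
        rw [div_le_div_iff₀ (by positivity) (by positivity)]
        calc l ^ n * L ^ (n + d + 1) = l ^ n * L ^ d * L ^ (n + 1) := by ring
          _ ≤ l ^ n * (2 * l) ^ d * L ^ (n + 1) := by gcongr
          _ = 2 ^ d * l ^ (n + d) * L ^ (n + 1) := by ring
          _ ≤ 2 ^ (n + d) * l ^ (n + d) * L ^ (n + 1) := by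
            gcongr
            · norm_num
            · omega
    calc _ ≤ 1 / u ^ 2 * (k * (2 ^ k * l ^ k / L ^ (k + 1))) := by gcongr
      _ = ((k * 2 ^ k + 0) * (l ^ k / u ^ 2) + 0) * (1 / L ^ (k + 1)) := by ring
      _ ≤ _ := by
          gcongr
          · norm_num
          · positivity

theorem lif_asymptotic_expansion :
    ∀ k : ℕ, 1 ≤ k → ∃ C > (0:ℝ), ∀ᶠ x : ℝ in atTop,
      |lif x - ∑ n ∈ Finset.range k, cconst n * (n.factorial : ℝ) * x / (Real.log x) ^ (n + 1)| ≤
        C * x / (Real.log x) ^ (k + 1) := by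
  intro k _
  set H : ℝ → ℝ := fun u => (k * 2 ^ k + 1) * ((Real.log u) ^ k / u ^ 2)
        + 1 / Real.log 2 * ((Real.log u) ^ (k + 1) / u ^ 2) with hH
  have hHi : IntegrableOn H (Set.Ioi 1) :=
    ((aux_int k).const_mul _).add ((aux_int (k + 1)).const_mul _)
  refine ⟨|∫ u in Set.Ioi (1:ℝ), H u| + 1, by positivity, ?_⟩
  filter_upwards [eventually_ge_atTop 4] with x hx
  have hx0 : 0 < x := by linarith
  have hL : 0 < Real.log x := Real.log_pos (by linarith)
  have hsum : ∑ n ∈ Finset.range k, cconst n * (n.factorial : ℝ) * x / (Real.log x) ^ (n + 1)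
      = x * ∫ u in Set.Ioi (1:ℝ), ∑ n ∈ Finset.range k,
          Int.fract u * (Real.log u) ^ n / u ^ 2 / (Real.log x) ^ (n + 1) := by
    rw [integral_finsetSum _ (fun n _ => (aux_intf n).div_const _), Finset.mul_sum]
    refine Finset.sum_congr rfl fun n _ => ?_
    rw [integral_div]
    unfold cconst
    have : (n.factorial : ℝ) ≠ 0 := by positivity
    field_simp
  rw [hsum, aux_lif x hx, ← mul_sub, ← integral_sub (aux_Aint x)
    (integrable_finsetSum _ (fun n _ => (aux_intf n).div_const _)), abs_mul, abs_of_pos hx0]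
  have hb := norm_integral_le_of_norm_le (hHi.mul_const (1 / (Real.log x) ^ (k + 1)))
    ((ae_restrict_iff' measurableSet_Ioi).2 (Eventually.of_forall fun u hu => aux_pt k x hx u hu))
  rw [integral_mul_const, Real.norm_eq_abs] at hb
  calc _ ≤ x * ((∫ u in Set.Ioi (1:ℝ), H u) * (1 / (Real.log x) ^ (k + 1))) := by gcongr
    _ ≤ x * ((|∫ u in Set.Ioi (1:ℝ), H u| + 1) * (1 / (Real.log x) ^ (k + 1))) := by
      gcongr
      linarith [le_abs_self (∫ u in Set.Ioi (1:ℝ), H u)]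
    _ = _ := by ring
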